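/- Let k ≡ 3 (mod 4), k ≥ 7, and let P₃ ≅ S^(k-2,2) mod 2 be the irreducible summand of the 𝔽₂ A_k permutation module on 2-subsets as above. Then dim H²(A_k, P₃) = 1 over 𝔽₂. -/

import Mathlib

open Pointwise

/-- Permutation representation of `G` on `X → F` from an action of `G` on `X`. -/
def permRep (F G X : Type*) [CommRing F] [Group G] [MulAction G X] :
    Representation F G (X → F) where
  toFun g := LinearMap.funLeft F F (fun x => g⁻¹ • x)
  map_one' := by ext v x; simp
  map_mul' g h := by ext v x; simp [LinearMap.funLeft, mul_smul]

variable {F G V : Type*} [CommRing F] [Group G] [AddCommGroup V] [Module F V]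

/-- A submodule invariant under a representation. -/
def InvSub (ρ : Representation F G V) (U : Submodule F V) : Prop :=
  ∀ g, ∀ v ∈ U, ρ g v ∈ U

/-- The subrepresentation on an invariant submodule. -/
def subRep (ρ : Representation F G V) (U : Submodule F V)
    (hU : InvSub ρ U) : Representation F G U where
  toFun g := (ρ g).restrict (hU g)
  map_one' := by ext v; simp [LinearMap.restrict_apply]
  map_mul' g h := by ext v; simp [LinearMap.restrict_apply]

/-- The set of 2-element subsets of `{1,…,k}`. -/
def Xk (k : ℕ) := {s : Finset (Fin k) // s.card = 2}

instance (k : ℕ) : Fintype (Xk k) := Subtype.fintype _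
instance (k : ℕ) : DecidableEq (Xk k) := Subtype.instDecidableEq

instance (k : ℕ) : MulAction (Equiv.Perm (Fin k)) (Xk k) where
  smul g s := ⟨g • s.1, by rw [Finset.card_smul_finset]; exact s.2⟩
  one_smul s := Subtype.ext (one_smul _ s.1)
  mul_smul g h s := Subtype.ext (mul_smul g h s.1)

/-- The linear functional `v ↦ ∑_s w s * v s`. -/
noncomputable def formMap {X : Type*} [Fintype X] [DecidableEq X] (F : Type*) [CommRing F]
    (w : X → F) : (X → F) →ₗ[F] F :=
  ∑ q : X, w q • (LinearMap.proj q : (X → F) →ₗ[F] F)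

/-- Orthogonal complement of `U` with respect to the standard form. -/
noncomputable def perpSub {X : Type*} [Fintype X] [DecidableEq X] (F : Type*) [CommRing F]
    (U : Submodule F (X → F)) : Submodule F (X → F) :=
  ⨅ w : U, LinearMap.ker (formMap F (w : X → F))

/-- The orthogonal complement of an invariant submodule is invariant. -/
lemma perpSub_inv {X : Type*} [Fintype X] [DecidableEq X]
    (F G : Type*) [CommRing F] [Group G] [MulAction G X]
    (U : Submodule F (X → F)) (hU : InvSub (permRep F G X) U) :
    InvSub (permRep F G X) (perpSub F U) := by
  intro g v hv
  have hv2 : ∀ w : U, ∑ q : X, (w : X → F) q * v q = 0 := by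
    intro w
    have h2 := hv
    rw [perpSub] at h2
    have := (Submodule.mem_iInf _).mp h2 w
    simpa only [LinearMap.mem_ker, formMap, LinearMap.sum_apply,
      LinearMap.smul_apply, LinearMap.proj_apply, smul_eq_mul] using this
  rw [perpSub]
  refine (Submodule.mem_iInf _).mpr fun w => ?_
  simp only [LinearMap.mem_ker, formMap, LinearMap.sum_apply,
    LinearMap.smul_apply, LinearMap.proj_apply, smul_eq_mul]
  calc ∑ q : X, (w : X → F) q * permRep F G X g v q
      = ∑ q : X, (w : X → F) (g • q) * v q := by
        exact Fintype.sum_equiv (MulAction.toPerm g).symm _ _ (fun q => by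
          simp [MulAction.toPerm, permRep, LinearMap.funLeft])
    _ = 0 := by
        have hw : permRep F G X g⁻¹ (w : X → F) ∈ U := hU g⁻¹ w w.2
        have := hv2 ⟨_, hw⟩
        rw [← this]
        exact Finset.sum_congr rfl fun q _ => by
          simp [permRep, LinearMap.funLeft]

/-- `f = Σ_{i<j} e_{ij}`: the all-ones vector. -/
def allOnes (k : ℕ) : Xk k → ZMod 2 := fun _ => 1

/-- `x_i = Σ_j e_{ij}`. -/
def xVec (k : ℕ) (i : Fin k) : Xk k → ZMod 2 := fun s => if i ∈ s.1 then 1 else 0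

def P1 (k : ℕ) : Submodule (ZMod 2) (Xk k → ZMod 2) :=
  Submodule.span (ZMod 2) {allOnes k}

def P2 (k : ℕ) : Submodule (ZMod 2) (Xk k → ZMod 2) :=
  Submodule.span (ZMod 2) (Set.range (xVec k))

lemma P1_sup_P2_inv (k : ℕ) :
    InvSub (permRep (ZMod 2) (alternatingGroup (Fin k)) (Xk k)) (P1 k ⊔ P2 k) := by
  intro g v hv
  have : (P1 k ⊔ P2 k).map (permRep (ZMod 2) (alternatingGroup (Fin k)) (Xk k) g)
      ≤ P1 k ⊔ P2 k := by
    rw [Submodule.map_sup, P1, P2, Submodule.map_span, Submodule.map_span]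
    refine sup_le_sup (Submodule.span_le.mpr ?_) (Submodule.span_le.mpr ?_)
    · rintro - ⟨w, rfl, rfl⟩
      exact Submodule.subset_span rfl
    · rintro - ⟨-, ⟨i, rfl⟩, rfl⟩
      refine Submodule.subset_span ⟨(g : Equiv.Perm (Fin k)) i, ?_⟩
      funext s
      show xVec k ((g : Equiv.Perm (Fin k)) i) s = xVec k i (g⁻¹ • s)
      have hmem : ((g : Equiv.Perm (Fin k)) i ∈ s.1) ↔ (i ∈ ((g⁻¹ • s : Xk k)).1) := by
        show _ ↔ i ∈ (g : Equiv.Perm (Fin k))⁻¹ • s.1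
        rw [Finset.mem_inv_smul_finset_iff]
        exact Iff.rfl
      simp only [xVec, hmem]
  exact this ⟨v, hv, rfl⟩

/-- `P₃ = (P₁ + P₂)^⊥ ≅ S^(k-2,2)`, with its `A_k`-representation. -/
noncomputable def P3Rep (k : ℕ) :
    Representation (ZMod 2) (alternatingGroup (Fin k))
      (perpSub (ZMod 2) (P1 k ⊔ P2 k)) :=
  subRep _ _ (perpSub_inv (ZMod 2) (alternatingGroup (Fin k)) _ (P1_sup_P2_inv k))

/-!
Over `𝔽₂` and for `k ≡ 3 (mod 4)`, the matrix of non-incidence of pairs and points has orthonormal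
columns, and these span `P₁ + P₂`. Hence the permutation module on pairs is the direct sum of `P₃`
and the permutation module on points, and by Shapiro's lemma the dimension sought is the
difference between those of `H²(-, 𝔽₂)` of the stabilizers of a pair and of a point in `A_k`.

The stabilizer of a pair is the symmetric group `S_{k-2}`. There, a class in `H²` is determined by
the squares of the lifts of a transposition and of a double transposition to the central extension:
if both vanish, the lifted transpositions satisfy the relations of `S_{k-2}` and the extension
splits. The spin double cover and the cup square of the sign show that both squares can be
prescribed, so the dimension is 2. The stabilizer `A_{k-1}` of a point contains `S_{k-3}` with odd
index, so restriction is injective by transfer. Transpositions and double transpositions of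
`S_{k-3}` become conjugate in `A_{k-1}`, and the spin cover gives a nonzero class, so the dimension
is 1.
-/

section Cocycles

variable {S T A : Type*} [Group S] [Group T] [AddCommGroup A]

/-- A 2-cocycle of `S` with values in `A`, on which `S` acts trivially. -/
def IsTwoCocycle (f : S → S → A) : Prop :=
  ∀ a b c, f (a * b) c + f a b = f b c + f a (b * c)

/-- A 2-coboundary of `S` with values in `A`, on which `S` acts trivially. -/
def IsTwoCoboundary (f : S → S → A) : Prop :=
  ∃ x : S → A, ∀ a b, x b - x (a * b) + x a = f a b

lemma IsTwoCocycle.one_left {f : S → S → A} (hf : IsTwoCocycle f) (a : S) : f 1 a = f 1 1 := by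
  simpa using (hf 1 1 a).symm

lemma IsTwoCocycle.one_right {f : S → S → A} (hf : IsTwoCocycle f) (a : S) : f a 1 = f 1 1 := by
  simpa using hf a 1 1

lemma IsTwoCocycle.add {f g : S → S → A} (hf : IsTwoCocycle f) (hg : IsTwoCocycle g) :
    IsTwoCocycle (f + g) := fun a b c => by
  simp only [Pi.add_apply]
  rw [add_add_add_comm, hf, hg, add_add_add_comm]

lemma IsTwoCocycle.smul {R : Type*} [DistribSMul R A] {f : S → S → A} (hf : IsTwoCocycle f)
    (r : R) : IsTwoCocycle (r • f) := fun a b c => by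
  simp only [Pi.smul_apply, ← smul_add, hf a b c]

lemma IsTwoCocycle.comp {f : S → S → A} (hf : IsTwoCocycle f) (φ : T →* S) :
    IsTwoCocycle fun a b => f (φ a) (φ b) := fun a b c => by
  simpa only [map_mul] using hf (φ a) (φ b) (φ c)

lemma IsTwoCoboundary.comp {f : S → S → A} (hf : IsTwoCoboundary f) (φ : T →* S) :
    IsTwoCoboundary fun a b => f (φ a) (φ b) := by
  obtain ⟨x, hx⟩ := hf
  exact ⟨x ∘ φ, fun a b => by simpa only [Function.comp_apply, map_mul] using hx (φ a) (φ b)⟩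

lemma isTwoCocycle_mul_hom {R : Type*} [Ring R] (χ : S →* Multiplicative R) :
    IsTwoCocycle fun a b => (χ a).toAdd * (χ b).toAdd := fun a b c => by
  simp only [map_mul, toAdd_mul]
  noncomm_ring

/-- The central extension of `S` by `A` defined by a 2-cocycle: the set `S × A` with product
`(s, a) * (t, b) = (s * t, a + b + f s t)`. As `f` is not assumed to be normalised, the identity is
`(1, -f 1 1)`. -/
@[ext] structure CocycleExtension {f : S → S → A} (hf : IsTwoCocycle f) where
  base : S
  fiber : A

namespace CocycleExtension

variable {f : S → S → A} {hf : IsTwoCocycle f}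

instance : Mul (CocycleExtension hf) :=
  ⟨fun x y => ⟨x.base * y.base, x.fiber + y.fiber + f x.base y.base⟩⟩

instance : One (CocycleExtension hf) := ⟨⟨1, -f 1 1⟩⟩

instance : Inv (CocycleExtension hf) :=
  ⟨fun x => ⟨x.base⁻¹, -x.fiber - f x.base⁻¹ x.base - f 1 1⟩⟩

@[simp] lemma base_mul (x y : CocycleExtension hf) : (x * y).base = x.base * y.base := rfl

@[simp] lemma fiber_mul (x y : CocycleExtension hf) :
    (x * y).fiber = x.fiber + y.fiber + f x.base y.base := rfl

@[simp] lemma base_one : (1 : CocycleExtension hf).base = 1 := rfl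

@[simp] lemma fiber_one : (1 : CocycleExtension hf).fiber = -f 1 1 := rfl

@[simp] lemma base_inv (x : CocycleExtension hf) : x⁻¹.base = x.base⁻¹ := rfl

@[simp] lemma fiber_inv (x : CocycleExtension hf) :
    x⁻¹.fiber = -x.fiber - f x.base⁻¹ x.base - f 1 1 := rfl

instance : Group (CocycleExtension hf) :=
  Group.ofLeftAxioms
    (fun x y z => by
      ext
      · simp [mul_assoc]
      · simp only [fiber_mul, base_mul, eq_sub_of_add_eq (hf x.base y.base z.base)]
        abel)
    (fun x => by ext <;> simp [hf.one_left])
    (fun x => by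
      ext
      · simp
      · simp only [fiber_mul, fiber_inv, base_inv, fiber_one]
        abel)

/-- The projection of a central extension to its base. -/
def proj (hf : IsTwoCocycle f) : CocycleExtension hf →* S where
  toFun := base
  map_one' := rfl
  map_mul' _ _ := rfl

lemma proj_surjective : Function.Surjective (proj hf) := fun s => ⟨⟨s, 0⟩, rfl⟩

/-- The inclusion of the kernel of a central extension; the shift by `f 1 1` takes `0` to the
identity. -/
def incl (hf : IsTwoCocycle f) : Multiplicative A →* CocycleExtension hf where
  toFun a := ⟨1, a.toAdd - f 1 1⟩
  map_one' := by ext <;> simp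
  map_mul' a b := by
    ext
    · simp
    · simp only [toAdd_mul, fiber_mul]
      abel

@[simp] lemma base_incl (a : Multiplicative A) : (incl hf a).base = 1 := rfl

@[simp] lemma fiber_incl (a : Multiplicative A) : (incl hf a).fiber = a.toAdd - f 1 1 := rfl

lemma incl_commute (a : Multiplicative A) (x : CocycleExtension hf) : Commute (incl hf a) x := by
  ext
  · simp
  · simp only [fiber_mul, fiber_incl, base_incl, hf.one_left, hf.one_right]
    abel

lemma ker_proj_le_center : (proj hf).ker ≤ Subgroup.center (CocycleExtension hf) := by
  intro x hx
  have hx : x = incl hf (.ofAdd (x.fiber + f 1 1)) := by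
    ext
    · exact hx
    · simp
  exact hx ▸ Subgroup.mem_center_iff.2 fun y => (incl_commute _ y).eq.symm

lemma isTwoCoboundary_of_section (s : S →* CocycleExtension hf)
    (hs : (proj hf).comp s = MonoidHom.id S) : IsTwoCoboundary f := by
  have hbase (a : S) : (s a).base = a := DFunLike.congr_fun hs a
  refine ⟨fun a => -(s a).fiber, fun a b => ?_⟩
  simp only [map_mul, fiber_mul, hbase]
  abel

end CocycleExtension

open CocycleExtension in
/-- The transfer of the trivialisation over `D`, viewed as a character of the preimage of `D` in
the central extension, restricts to the `D.index`-th power map on the kernel. -/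
lemma IsTwoCocycle.index_nsmul_isTwoCoboundary {f : S → S → A} (hf : IsTwoCocycle f)
    (D : Subgroup S) [D.FiniteIndex] (hD : IsTwoCoboundary fun a b : D => f a b) :
    IsTwoCoboundary fun a b => D.index • f a b := by
  obtain ⟨x, hx⟩ := hD
  let E : Subgroup (CocycleExtension hf) := D.comap (proj hf)
  have index_E : E.index = D.index := Subgroup.index_comap_of_surjective _ proj_surjective
  have : E.FiniteIndex := ⟨index_E ▸ Subgroup.FiniteIndex.index_ne_zero⟩
  let ψ : E →* Multiplicative A := MonoidHom.mk'
    (fun e => .ofAdd (e.1.fiber + x ((proj hf).subgroupComap D e))) fun e e' => by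
      have hfx : f e.1.base e'.1.base = _ :=
        (hx ((proj hf).subgroupComap D e) ((proj hf).subgroupComap D e')).symm
      simp only [← ofAdd_add, Subgroup.coe_mul, fiber_mul, map_mul, hfx]
      congr 1
      abel
  have transfer_incl (a : Multiplicative A) : ψ.transfer (incl hf a) = a ^ D.index := by
    have hψ (b : Multiplicative A) : ψ ⟨incl hf b, D.one_mem⟩ = b := by
      have h1 := hx 1 1
      simp only [mul_one, sub_self, zero_add, OneMemClass.coe_one] at h1
      change Multiplicative.ofAdd (b.toAdd - f 1 1 + x 1) = b
      rw [h1, sub_add_cancel, ofAdd_toAdd]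
    rw [MonoidHom.transfer_eq_pow ψ _ fun n y _ => by
      rw [← map_pow, mul_assoc, (incl_commute _ y).eq, inv_mul_cancel_left]]
    simp only [← map_pow, index_E, hψ]
  refine ⟨fun s => (ψ.transfer ⟨s, 0⟩).toAdd, fun a b => ?_⟩
  have hmul : (⟨a, 0⟩ * ⟨b, 0⟩ : CocycleExtension hf) = incl hf (.ofAdd (f a b)) * ⟨a * b, 0⟩ := by
    ext <;> simp [hf.one_left]
  have := congrArg Multiplicative.toAdd (congrArg ψ.transfer hmul)
  simp only [map_mul, transfer_incl, toAdd_mul, toAdd_pow, toAdd_ofAdd] at this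
  simp only [eq_sub_of_add_eq this]
  abel

end Cocycles

section ProjectiveLift

variable {S A E : Type*} [Group S] [AddCommGroup A] [Group E]
  {j : Multiplicative A →* E} {u : S → E}

lemma exists_isTwoCocycle_of_mul_eq (hj : Function.Injective j) (hcomm : ∀ a x, Commute (j a) x)
    (hu : ∀ a b, ∃ c, u a * u b = j c * u (a * b)) :
    ∃ f : S → S → A, IsTwoCocycle f ∧ ∀ a b, u a * u b = j (.ofAdd (f a b)) * u (a * b) := by
  choose c hc using hu
  refine ⟨fun a b => (c a b).toAdd, fun a b d => Multiplicative.ofAdd.injective (hj ?_), hc⟩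
  simp only [ofAdd_add, ofAdd_toAdd, map_mul]
  apply mul_right_cancel (b := u (a * b * d))
  calc j (c (a * b) d) * j (c a b) * u (a * b * d)
      = j (c a b) * (j (c (a * b) d) * u (a * b * d)) := by rw [(hcomm _ _).eq, mul_assoc]
    _ = u a * (u b * u d) := by rw [← hc, ← mul_assoc, ← hc, mul_assoc]
    _ = j (c b d) * (u a * u (b * d)) := by rw [hc b d, ← mul_assoc, ← (hcomm _ _).eq, mul_assoc]
    _ = j (c b d) * j (c a (b * d)) * u (a * b * d) := by rw [hc, mul_assoc, mul_assoc]

lemma mul_self_eq_of_mul_eq {f : S → S → A} (hu : ∀ a b, u a * u b = j (.ofAdd (f a b)) * u (a * b))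
    {s : S} (hs : s * s = 1) : u s * u s = j (.ofAdd (f s s + f 1 1)) := by
  have hu1 : u 1 = j (.ofAdd (f 1 1)) := by simpa using hu 1 1
  rw [hu, hs, hu1, ofAdd_add, map_mul]

end ProjectiveLift

section LiftSquare

variable {S : Type*} [Group S]

/-- For an involution `s` and a 2-cocycle `f`, the square of any lift of `s` to the central
extension of `f`, as an element of the kernel `ZMod 2`. -/
def liftSquare (s : S) : (S → S → ZMod 2) →ₗ[ZMod 2] ZMod 2 where
  toFun f := f s s + f 1 1
  map_add' f g := by
    simp only [Pi.add_apply]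
    abel
  map_smul' c f := by simp [mul_add]

lemma liftSquare_apply (s : S) (f : S → S → ZMod 2) : liftSquare s f = f s s + f 1 1 := rfl

lemma IsTwoCoboundary.liftSquare_eq_zero {f : S → S → ZMod 2} (hf : IsTwoCoboundary f) {s : S}
    (hs : s * s = 1) : liftSquare s f = 0 := by
  obtain ⟨x, hx⟩ := hf
  rw [liftSquare_apply, ← hx, ← hx, hs, mul_one, sub_self, zero_add, sub_add_eq_add_sub,
    sub_add_cancel, CharTwo.add_self_eq_zero]

namespace IsTwoCocycle

variable {f : S → S → ZMod 2}

lemma mul_self_eq_one_iff (hf : IsTwoCocycle f) (x : CocycleExtension hf)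
    (hs : x.base * x.base = 1) :
    x * x = 1 ↔ liftSquare x.base f = 0 := by
  simp [CocycleExtension.ext_iff, hs, CharTwo.add_self_eq_zero, liftSquare_apply,
    CharTwo.add_eq_zero]

lemma liftSquare_eq_of_isConj (hf : IsTwoCocycle f) {s t : S} (hst : IsConj s t)
    (hs : s * s = 1) : liftSquare s f = liftSquare t f := by
  obtain ⟨u, rfl⟩ := isConj_iff.1 hst
  let x : CocycleExtension hf := ⟨s, 0⟩
  let y : CocycleExtension hf := ⟨u, 0⟩
  have ht : (y * x * y⁻¹).base * (y * x * y⁻¹).base = 1 := by simp [x, y, hs]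
  have h : liftSquare s f = 0 ↔ liftSquare (u * s * u⁻¹) f = 0 :=
    calc _ ↔ x * x = 1 := (hf.mul_self_eq_one_iff x hs).symm
      _ ↔ y * x * y⁻¹ * (y * x * y⁻¹) = 1 := by rw [conj_mul, conj_eq_one_iff]
      _ ↔ _ := hf.mul_self_eq_one_iff _ ht
  revert h
  generalize liftSquare s f = a, liftSquare (u * s * u⁻¹) f = b
  revert a b
  decide

lemma isTwoCoboundary_of_odd_index (hf : IsTwoCocycle f) (D : Subgroup S) (hD : Odd D.index)
    (h : IsTwoCoboundary fun a b : D => f a b) : IsTwoCoboundary f := by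
  have : D.FiniteIndex := ⟨hD.pos.ne'⟩
  have hsmul (c : ZMod 2) : D.index • c = c := by
    rw [nsmul_eq_mul, (ZMod.natCast_eq_one_iff_odd).2 hD, one_mul]
  simpa only [hsmul] using hf.index_nsmul_isTwoCoboundary D h

lemma isTwoCoboundary_of_odd_index_range {T : Type*} [Group T] (hf : IsTwoCocycle f) {J : T →* S}
    (hJ : Function.Injective J) (hodd : Odd J.range.index)
    (h : IsTwoCoboundary fun a b => f (J a) (J b)) : IsTwoCoboundary f := by
  refine hf.isTwoCoboundary_of_odd_index J.range hodd ?_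
  simpa only [MonoidHom.coe_coe, MonoidHom.apply_ofInjective_symm] using
    h.comp ((MonoidHom.ofInjective hJ).symm : J.range →* T)

end IsTwoCocycle

end LiftSquare

open CategoryTheory groupCohomology in
lemma finrank_H2_trivial_eq {S R V : Type} [Group S] [CommRing R] [AddCommGroup V] [Module R V]
    (Φ : (S → S → R) →ₗ[R] V) (hΦ : ∀ f, IsTwoCocycle f → (IsTwoCoboundary f ↔ Φ f = 0))
    (hsurj : ∀ v, ∃ f, IsTwoCocycle f ∧ Φ f = v) :
    Module.finrank R (groupCohomology (Rep.trivial R S R) 2) = Module.finrank R V := by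
  let A := Rep.trivial R S R
  let p : cocycles₂ A →ₗ[R] groupCohomology A 2 := (H2π A).hom
  have hp : Function.Surjective p := (ModuleCat.epi_iff_surjective _).1 inferInstance
  let curry : cocycles₂ A →ₗ[R] (S → S → R) :=
    (LinearEquiv.curry R R S S).toLinearMap ∘ₗ (cocycles₂ A).subtype
  have hcurry (f) : IsTwoCocycle (curry f) := fun a b c => (mem_cocycles₂_iff f.1).1 f.2 a b c
  let q : cocycles₂ A →ₗ[R] V := Φ ∘ₗ curry
  have hq : Function.Surjective q := fun v =>
    let ⟨f, hf, hfv⟩ := hsurj v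
    ⟨⟨fun x => f x.1 x.2, (mem_cocycles₂_iff (A := A) _).2 hf⟩, hfv⟩
  have hker : LinearMap.ker p = LinearMap.ker q := by
    ext f
    refine ((H2π_eq_zero_iff f).trans ?_).trans (hΦ _ (hcurry f))
    exact ⟨fun ⟨x, hx⟩ => ⟨x, fun a b => congrFun hx (a, b)⟩,
      fun ⟨x, hx⟩ => ⟨x, funext fun ab => hx ab.1 ab.2⟩⟩
  exact ((p.quotKerEquivOfSurjective hp).symm.trans ((Submodule.quotEquivOfEq _ _ hker).trans
    (q.quotKerEquivOfSurjective hq))).finrank_eq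

section TranspositionSystem

open Equiv Subgroup

variable {α Q : Type*} [DecidableEq α] [Group Q]

/-- Elements `c a b` of a group satisfying the relations between the transpositions `swap a b`:
they are involutions, and conjugation by `c a b` permutes them as conjugation by `swap a b`
does. -/
structure IsTranspositionSystem (c : α → α → Q) : Prop where
  refl : ∀ a, c a a = 1
  mul_self : ∀ a b, c a b * c a b = 1
  mul_eq : ∀ a b i j, c a b * c i j = c (swap a b i) (swap a b j) * c a b

lemma isTranspositionSystem_swap : IsTranspositionSystem (swap : α → α → Perm α) where
  refl := swap_self
  mul_self := swap_mul_self
  mul_eq a b i j := by rw [swap_apply_apply, inv_mul_cancel_right]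

namespace IsTranspositionSystem

lemma prod {Q' : Type*} [Group Q'] {c : α → α → Q} {d : α → α → Q'}
    (hc : IsTranspositionSystem c) (hd : IsTranspositionSystem d) :
    IsTranspositionSystem fun a b => (c a b, d a b) where
  refl a := Prod.ext (hc.refl a) (hd.refl a)
  mul_self a b := Prod.ext (hc.mul_self a b) (hd.mul_self a b)
  mul_eq a b i j := Prod.ext (hc.mul_eq a b i j) (hd.mul_eq a b i j)

variable {c : α → α → Q} {s : Set α} {m : α}

lemma comm (hc : IsTranspositionSystem c) (a b : α) : c a b = c b a := by
  simpa using hc.mul_eq a b a b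

lemma exists_mul_mul_eq (hc : IsTranspositionSystem c) (hm : m ∉ s) {a b i : α}
    (ha : a ∈ insert m s) (hb : b ∈ insert m s) (hi : i ∈ insert m s) :
    ∃ i' ∈ insert m s, ∃ y ∈ closure (Set.image2 c s s), c a b * c i m = c i' m * y := by
  have mem {a b : α} (ha : a ∈ s) (hb : b ∈ s) : c a b ∈ closure (Set.image2 c s s) :=
    subset_closure ⟨a, ha, b, hb, rfl⟩
  have ne {a : α} (ha : a ∈ s) : a ≠ m := fun h => hm (h ▸ ha)
  have mul_last {j : α} (hj : j ∈ s) :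
      ∃ i' ∈ insert m s, ∃ y ∈ closure (Set.image2 c s s), c j m * c i m = c i' m * y := by
    rcases hi with rfl | hi
    · exact ⟨j, .inr hj, 1, one_mem _, by rw [hc.refl]⟩
    by_cases hji : j = i
    · exact ⟨m, .inl rfl, 1, one_mem _, by rw [hji, hc.mul_self, hc.refl, one_mul]⟩
    · refine ⟨i, .inr hi, c j i, mem hj hi, ?_⟩
      rw [hc.mul_eq i m j i, swap_apply_left, swap_apply_of_ne_of_ne hji (ne hj)]
  rcases ha with rfl | ha <;> rcases hb with rfl | hb
  · exact ⟨i, hi, 1, one_mem _, by rw [hc.refl, one_mul, mul_one]⟩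
  · exact hc.comm b a ▸ mul_last hb
  · exact mul_last ha
  · refine ⟨swap a b i, ?_, c a b, mem ha hb, ?_⟩
    · rw [swap_apply_def]
      split_ifs
      exacts [.inr hb, .inr ha, hi]
    · rw [hc.mul_eq a b i m, swap_apply_of_ne_of_ne (ne ha).symm (ne hb).symm]

lemma exists_eq_mul_of_mem_closure (hc : IsTranspositionSystem c) (hm : m ∉ s) {x : Q}
    (hx : x ∈ closure (Set.image2 c (insert m s) (insert m s))) :
    ∃ i ∈ insert m s, ∃ y ∈ closure (Set.image2 c s s), x = c i m * y := by
  have mul_left {x : Q} (hx : x ∈ Set.image2 c (insert m s) (insert m s)) {y : Q}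
      (hy : ∃ i ∈ insert m s, ∃ z ∈ closure (Set.image2 c s s), y = c i m * z) :
      ∃ i ∈ insert m s, ∃ z ∈ closure (Set.image2 c s s), x * y = c i m * z := by
    obtain ⟨a, ha, b, hb, rfl⟩ := hx
    obtain ⟨i, hi, z, hz, rfl⟩ := hy
    obtain ⟨i', hi', z', hz', h⟩ := hc.exists_mul_mul_eq hm ha hb hi
    exact ⟨i', hi', z' * z, mul_mem hz' hz, by rw [← mul_assoc, h, mul_assoc]⟩
  induction hx using closure_induction_left with
  | one => exact ⟨m, .inl rfl, 1, one_mem _, by rw [hc.refl, one_mul]⟩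
  | mul_left x hx y _ ih => exact mul_left hx ih
  | inv_mul_cancel x hx y _ ih =>
    have hinv : x⁻¹ = x := by
      obtain ⟨a, -, b, -, rfl⟩ := hx
      exact inv_eq_of_mul_eq_one_right (hc.mul_self a b)
    rw [hinv]
    exact mul_left hx ih

/-- Coset enumeration along the subgroups generated by the pairs with indices in a growing set `s`:
an element over the identity permutation always lies in the trivial coset. -/
lemma eq_one_of_mk_one_mem_closure (hc : IsTranspositionSystem c) (s : Finset α) {q : Q}
    (hq : (q, (1 : Perm α)) ∈ closure (Set.image2 (fun a b => (c a b, swap a b)) s s)) :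
    q = 1 := by
  have hd := hc.prod isTranspositionSystem_swap
  induction s using Finset.induction generalizing q with
  | empty => simpa using hq
  | insert m s hm ih =>
    rw [Finset.coe_insert] at hq
    obtain ⟨i, -, y, hy, h⟩ := hd.exists_eq_mul_of_mem_closure (Finset.mem_coe.not.2 hm) hq
    have hfix : y.2 m = m := by
      have hle : closure (Set.image2 (fun a b => (c a b, swap a b)) s s) ≤
          (MulAction.stabilizer (Perm α) m).comap (MonoidHom.snd Q (Perm α)) := by
        rw [closure_le]
        rintro - ⟨a, ha, b, hb, rfl⟩
        exact swap_apply_of_ne_of_ne (ne_of_mem_of_not_mem ha hm).symm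
          (ne_of_mem_of_not_mem hb hm).symm
      exact hle hy
    have him : m = i := by
      simpa [hfix] using Perm.congr_fun (congrArg Prod.snd h) m
    rw [← him, hd.refl, one_mul] at h
    exact ih (h ▸ hy)

/-- The subgroup of `Q × Perm α` generated by the pairs `(c a b, swap a b)` is the graph of `φ`. -/
theorem exists_monoidHom [Finite α] (hc : IsTranspositionSystem c) :
    ∃ φ : Perm α →* Q, ∀ a b, φ (swap a b) = c a b := by
  have := Fintype.ofFinite α
  let T := closure (Set.image2 (fun a b => (c a b, swap a b)) (Finset.univ : Finset α)
    (Finset.univ : Finset α))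
  have mem (a b) : (c a b, swap a b) ∈ T := subset_closure ⟨a, by simp, b, by simp, rfl⟩
  let p : T →* Perm α := (MonoidHom.snd Q (Perm α)).comp T.subtype
  have hp : Function.Bijective p := by
    refine ⟨(injective_iff_map_eq_one p).2 ?_, ?_⟩
    · rintro ⟨⟨q, σ⟩, h⟩ (rfl : σ = 1)
      exact Subtype.ext (Prod.ext (hc.eq_one_of_mk_one_mem_closure _ h) rfl)
    · rw [← MonoidHom.range_eq_top, eq_top_iff, ← Perm.closure_isSwap, closure_le]
      rintro - ⟨a, b, -, rfl⟩
      exact ⟨⟨_, mem a b⟩, rfl⟩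
  refine ⟨((MonoidHom.fst Q (Perm α)).comp T.subtype).comp
    (MulEquiv.ofBijective p hp).symm.toMonoidHom, fun a b => ?_⟩
  have : (MulEquiv.ofBijective p hp).symm (swap a b) = ⟨_, mem a b⟩ :=
    (MulEquiv.symm_apply_eq _).2 rfl
  exact congrArg (fun x : T => x.1.1) this

end IsTranspositionSystem

end TranspositionSystem

section Splitting

open Equiv Subgroup

variable {α E : Type*} [DecidableEq α] [Finite α] [Group E]

lemma mem_closure_of_commute_swap {a b : α} (hab : a ≠ b) {g : Perm α}
    (hg : Commute g (swap a b)) :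
    g ∈ closure (insert (swap a b) (Set.image2 swap {a, b}ᶜ {a, b}ᶜ)) := by
  let S := insert (swap a b) (Set.image2 swap {a, b}ᶜ {a, b}ᶜ)
  have mem_iff (x : α) : x ∈ ({a, b} : Set α) ↔ swap a b x ≠ x := by
    simp [swap_apply_ne_self_iff, hab]
  have apply_mem_iff (x : α) : g x ∈ ({a, b} : Set α) ↔ x ∈ ({a, b} : Set α) := by
    rw [mem_iff, mem_iff, ← Perm.mul_apply, ← hg.eq, Perm.mul_apply, g.injective.ne_iff]
  suffices h : g ∈ closure {f ∈ S | f.IsSwap} from closure_mono (Set.sep_subset _ _) h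
  refine (mem_closure_isSwap fun f hf => hf.2).2 ⟨Set.toFinite _, fun x => ?_⟩
  by_cases hgx : g x = x
  · rw [hgx]
    exact MulAction.mem_orbit_self x
  obtain ⟨f, hfS, hf⟩ : ∃ f ∈ {f ∈ S | f.IsSwap}, f x = g x := by
    by_cases hx : x ∈ ({a, b} : Set α)
    · refine ⟨swap a b, ⟨.inl rfl, a, b, hab, rfl⟩, ?_⟩
      have hx' := (apply_mem_iff x).2 hx
      rcases hx with rfl | rfl <;> rcases hx' with h | h <;> simp_all
    · exact ⟨swap x (g x), ⟨.inr ⟨x, hx, g x, (apply_mem_iff x).not.2 hx, rfl⟩, x, g x,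
        Ne.symm hgx, rfl⟩, swap_apply_left x (g x)⟩
  exact ⟨⟨f, subset_closure hfS⟩, hf⟩

lemma commute_inv_mul_iff_conj_eq {x y t : E} :
    Commute (y⁻¹ * x) t ↔ x * t * x⁻¹ = y * t * y⁻¹ := by
  rw [Commute, SemiconjBy, mul_assoc, inv_mul_eq_iff_eq_mul, mul_inv_eq_iff_eq_mul]
  simp only [mul_assoc]

variable {π : E →* Perm α} {t : E} {a b : α}

lemma commute_of_commute_map (hker : π.ker ≤ center E) (hab : a ≠ b) (ht : π t = swap a b)
    (hcomm : ∀ x ∉ ({a, b} : Set α), ∀ y ∉ ({a, b} : Set α), ∃ u, π u = swap x y ∧ Commute u t)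
    {w : E} (hw : Commute (π w) (swap a b)) : Commute w t := by
  let C := centralizer {t}
  have hle : closure (insert (swap a b) (Set.image2 swap {a, b}ᶜ {a, b}ᶜ)) ≤ C.map π := by
    rw [closure_le]
    rintro - (rfl | ⟨x, hx, y, hy, rfl⟩)
    · exact ⟨t, mem_centralizer_singleton_iff.2 rfl, ht⟩
    · obtain ⟨u, hu, hut⟩ := hcomm x hx y hy
      exact ⟨u, mem_centralizer_singleton_iff.2 hut, hu⟩
  have hwC : w ∈ (C.map π).comap π := hle (mem_closure_of_commute_swap hab hw)
  rw [comap_map_eq_self (hker.trans (center_le_centralizer _))] at hwC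
  exact mem_centralizer_singleton_iff.1 hwC

/-- As `t` commutes with all lifts of the centralizer of its image, each transposition has exactly
one lift conjugate to `t`, and these lifts form a transposition system. -/
theorem exists_section_of_lift_swap (hπ : Function.Surjective π) (hker : π.ker ≤ center E)
    (hab : a ≠ b) (ht : π t = swap a b) (htt : t * t = 1)
    (hcomm : ∀ x ∉ ({a, b} : Set α), ∀ y ∉ ({a, b} : Set α), ∃ u, π u = swap x y ∧ Commute u t) :
    ∃ s : Perm α →* E, π.comp s = MonoidHom.id (Perm α) := by
  have eq_of_isConj {u v : E} (hu : IsConj t u) (hv : IsConj t v) (huv : π u = π v) : u = v := by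
    obtain ⟨x, rfl⟩ := isConj_iff.1 hu
    obtain ⟨y, rfl⟩ := isConj_iff.1 hv
    simp only [map_mul, map_inv, ht, ← commute_inv_mul_iff_conj_eq] at huv
    rw [← map_inv, ← map_mul] at huv
    exact commute_inv_mul_iff_conj_eq.1 (commute_of_commute_map hker hab ht hcomm huv)
  have exists_lift (x y : α) : ∃ u, π u = swap x y ∧ (x ≠ y → IsConj t u) ∧ (x = y → u = 1) := by
    by_cases hxy : x = y
    · exact ⟨1, by rw [map_one, hxy, swap_self, Perm.one_def], fun h => absurd hxy h, fun _ => rfl⟩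
    · obtain ⟨g, hg⟩ := isConj_iff.1 (Perm.isConj_swap hab hxy)
      obtain ⟨w, rfl⟩ := hπ g
      exact ⟨w * t * w⁻¹, by simp [ht, hg], fun _ => isConj_iff.2 ⟨w, rfl⟩, fun h => absurd h hxy⟩
  choose c hπc hconj hone using exists_lift
  have hc : IsTranspositionSystem c :=
    { refl x := hone x x rfl
      mul_self x y := by
        by_cases hxy : x = y
        · rw [hone x y hxy, mul_one]
        · obtain ⟨w, hw⟩ := isConj_iff.1 (hconj x y hxy)
          rw [← hw, conj_mul, htt, mul_one, mul_inv_cancel]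
      mul_eq x y i j := by
        by_cases hij : i = j
        · rw [hone i j hij, hone _ _ (congrArg _ hij), mul_one, one_mul]
        · rw [← mul_inv_eq_iff_eq_mul]
          refine eq_of_isConj ((hconj i j hij).trans (isConj_iff.2 ⟨c x y, rfl⟩))
            (hconj _ _ ((swap x y).injective.ne hij)) ?_
          simp only [map_mul, map_inv, hπc, swap_apply_apply] }
  obtain ⟨s, hs⟩ := hc.exists_monoidHom
  refine ⟨s, MonoidHom.eq_of_eqOn_dense Perm.closure_isSwap ?_⟩
  rintro - ⟨x, y, -, rfl⟩
  simp [hs, hπc]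

end Splitting

section SymmetricCocycles

open Equiv

variable {α : Type*} [DecidableEq α]

lemma isConj_swap_mul_swap [Finite α] {a b c d a' b' c' d' : α} (h : [a, b, c, d].Nodup)
    (h' : [a', b', c', d'].Nodup) :
    IsConj (swap a b * swap c d) (swap a' b' * swap c' d') := by
  have hne {a b c d : α} (h : [a, b, c, d].Nodup) : a ≠ b ∧ c ≠ d := by simp_all
  exact (Perm.disjoint_swap_swap h).isConj_mul (Perm.isConj_swap (hne h).1 (hne h').1)
    (Perm.isConj_swap (hne h).2 (hne h').2) (Perm.disjoint_swap_swap h')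

lemma swap_mul_swap_mul_self {a b c d : α} (h : [a, b, c, d].Nodup) :
    swap a b * swap c d * (swap a b * swap c d) = 1 := by
  rw [(Perm.disjoint_swap_swap h).commute.symm.mul_mul_mul_comm, swap_mul_self, swap_mul_self,
    mul_one]

theorem IsTwoCocycle.isTwoCoboundary_of_liftSquare_eq_zero [Finite α]
    {f : Perm α → Perm α → ZMod 2} (hf : IsTwoCocycle f) {a b c d : α} (h : [a, b, c, d].Nodup)
    (hswap : liftSquare (swap a b) f = 0) (hdouble : liftSquare (swap a b * swap c d) f = 0) :
    IsTwoCoboundary f := by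
  have hab : a ≠ b := by simp_all
  let lift (σ : Perm α) : CocycleExtension hf := ⟨σ, 0⟩
  have ht : lift (swap a b) * lift (swap a b) = 1 :=
    (hf.mul_self_eq_one_iff _ (swap_mul_self a b)).2 hswap
  obtain ⟨s, hs⟩ := exists_section_of_lift_swap CocycleExtension.proj_surjective
    (CocycleExtension.ker_proj_le_center (hf := hf)) hab (t := lift (swap a b)) rfl ht
    fun x hx y hy => by
      by_cases hxy : x = y
      · exact ⟨1, by rw [map_one, hxy, swap_self, Perm.one_def], Commute.one_left _⟩
      have hnodup : [a, b, x, y].Nodup := by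
        simp only [Set.mem_insert_iff, Set.mem_singleton_iff, not_or] at hx hy
        simp [hab, hxy, Ne.symm hx.1, Ne.symm hx.2, Ne.symm hy.1, Ne.symm hy.2]
      have hu : lift (swap x y) * lift (swap x y) = 1 :=
        (hf.mul_self_eq_one_iff _ (swap_mul_self x y)).2 <|
          hf.liftSquare_eq_of_isConj (Perm.isConj_swap hab hxy) (swap_mul_self a b) ▸ hswap
      have htu : lift (swap a b) * lift (swap x y) * (lift (swap a b) * lift (swap x y)) = 1 :=
        (hf.mul_self_eq_one_iff _ (swap_mul_swap_mul_self hnodup)).2 <|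
          hf.liftSquare_eq_of_isConj (isConj_swap_mul_swap h hnodup) (swap_mul_swap_mul_self h) ▸
            hdouble
      refine ⟨lift (swap x y), rfl, ?_⟩
      calc lift (swap x y) * lift (swap a b)
          = (lift (swap x y))⁻¹ * (lift (swap a b))⁻¹ := by
            rw [inv_eq_of_mul_eq_one_left ht, inv_eq_of_mul_eq_one_left hu]
        _ = lift (swap a b) * lift (swap x y) := by
            rw [← mul_inv_rev, inv_eq_of_mul_eq_one_left htu]
  exact CocycleExtension.isTwoCoboundary_of_section s hs

end SymmetricCocycles

section Spin

open Equiv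

/-- The homomorphism `x ↦ (-1) ^ x` on `ZMod 2`; for `M` a group with `-1 ≠ 1`, it embeds `ZMod 2`
as the kernel of a double cover. -/
def negOnePowHom (M : Type*) [Monoid M] [HasDistribNeg M] : Multiplicative (ZMod 2) →* M where
  toFun x := (-1) ^ x.toAdd.val
  map_one' := by simp
  map_mul' x y := by rw [toAdd_mul, ZMod.val_add, ← pow_eq_pow_mod _ neg_one_sq, pow_add]

lemma negOnePowHom_commute {M : Type*} [Monoid M] [HasDistribNeg M] (x : Multiplicative (ZMod 2))
    (m : M) : Commute (negOnePowHom M x) m :=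
  (Commute.neg_one_left m).pow_left _

lemma negOnePowHom_injective {M : Type*} [Group M] [HasDistribNeg M] (h : (-1 : M) ≠ 1) :
    Function.Injective (negOnePowHom M) := by
  refine (injective_iff_map_eq_one _).2 fun x hx => ?_
  have hcases : ∀ y : ZMod 2, y = 0 ∨ y = 1 := by decide
  rcases hcases x.toAdd with hx0 | hx1
  · exact hx0
  · refine absurd ?_ h
    simpa [negOnePowHom, hx1, ZMod.val_one] using hx

lemma negOnePowHom_ofAdd_one {M : Type*} [Monoid M] [HasDistribNeg M] :
    negOnePowHom M (.ofAdd 1) = -1 := by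
  simp [negOnePowHom, ZMod.val_one]

instance normal_range_negOnePowHom (M : Type*) [Group M] [HasDistribNeg M] :
    (negOnePowHom M).range.Normal := by
  constructor
  rintro - ⟨x, rfl⟩ g
  exact ⟨x, by rw [(negOnePowHom_commute x g).symm.eq, mul_inv_cancel_right]⟩

/-- The Clifford algebra over `ZMod 3` of the sum of squares. The coefficients make differences of
standard generators units with square `2 = -1`, so that no square root of 2 is needed to define the
spin group. -/
abbrev SpinAlgebra (α : Type*) [Fintype α] : Type _ :=
  CliffordAlgebra (QuadraticMap.weightedSumSquares (ZMod 3) (1 : α → ZMod 3))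

namespace SpinAlgebra

variable {α : Type*} [Fintype α]

lemma three_eq_zero : (3 : SpinAlgebra α) = 0 := by
  rw [← map_ofNat (algebraMap (ZMod 3) (SpinAlgebra α)) 3,
    show (OfNat.ofNat 3 : ZMod 3) = 0 from rfl, map_zero]

lemma neg_one_ne_one : (-1 : SpinAlgebra α) ≠ 1 := by
  have : Invertible (2 : ZMod 3) := ⟨2, by decide, by decide⟩
  intro h
  have h3 : (3 : SpinAlgebra α) = 0 := three_eq_zero
  rw [← two_add_one_eq_three, ← one_add_one_eq_two] at h3
  nth_rw 1 [← h] at h3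
  rw [neg_add_cancel, zero_add] at h3
  exact one_ne_zero h3

variable [DecidableEq α]

/-- The standard orthonormal generators of `SpinAlgebra α`. -/
def gen (a : α) : SpinAlgebra α :=
  CliffordAlgebra.ι _ (Pi.single a 1)

lemma gen_mul_self (a : α) : gen a * gen a = 1 := by
  rw [gen, CliffordAlgebra.ι_sq_scalar, QuadraticMap.weightedSumSquares_apply]
  simp [Pi.single_apply]

lemma gen_mul_gen {a b : α} (h : a ≠ b) : gen a * gen b = -(gen b * gen a) := by
  refine CliffordAlgebra.ι_mul_ι_comm_of_isOrtho (QuadraticMap.isOrtho_def.2 ?_)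
  simp only [QuadraticMap.weightedSumSquares_apply, ← Finset.sum_add_distrib]
  refine Finset.sum_congr rfl fun i _ => ?_
  rcases eq_or_ne i a with rfl | hia
  · simp [h]
  · simp [hia]

lemma sub_mul_gen (a b i : α) :
    (gen a - gen b) * gen i = -(gen (swap a b i) * (gen a - gen b)) := by
  rcases eq_or_ne i a with rfl | hia
  · rw [swap_apply_left, sub_mul, mul_sub, gen_mul_self, gen_mul_self, neg_sub]
  rcases eq_or_ne i b with rfl | hib
  · rw [swap_apply_right, sub_mul, mul_sub, gen_mul_self, gen_mul_self, neg_sub]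
  · rw [swap_apply_of_ne_of_ne hia hib, sub_mul, mul_sub, gen_mul_gen hia.symm,
      gen_mul_gen hib.symm, neg_sub_neg, neg_sub]

lemma sub_mul_self {a b : α} (h : a ≠ b) : (gen a - gen b) * (gen a - gen b) = -1 :=
  calc (gen a - gen b) * (gen a - gen b) = 1 + 1 := by
        rw [sub_mul, mul_sub, mul_sub, gen_mul_self, gen_mul_self, gen_mul_gen h]
        abel
    _ = 3 - 1 := by norm_num
    _ = -1 := by rw [three_eq_zero, zero_sub]

/-- The unit `gen a - gen b`, which acts on the generators by conjugation as the negative of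
`swap a b`; for `a = b` it is `1` by convention. -/
def transposition (a b : α) : (SpinAlgebra α)ˣ :=
  if h : a = b then 1 else
    ⟨gen a - gen b, -(gen a - gen b), by rw [mul_neg, sub_mul_self h, neg_neg],
      by rw [neg_mul, sub_mul_self h, neg_neg]⟩

lemma transposition_self (a : α) : transposition a a = 1 := dif_pos rfl

lemma val_transposition {a b : α} (h : a ≠ b) :
    (transposition a b : SpinAlgebra α) = gen a - gen b := by
  rw [transposition, dif_neg h]

lemma transposition_mul_self {a b : α} (h : a ≠ b) :
    transposition a b * transposition a b = (-1 : (SpinAlgebra α)ˣ) :=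
  Units.ext <| by simp [val_transposition h, sub_mul_self h]

lemma transposition_mul {a b i j : α} (hab : a ≠ b) (hij : i ≠ j) :
    transposition a b * transposition i j =
      -(transposition (swap a b i) (swap a b j) * transposition a b) := by
  have hij' : swap a b i ≠ swap a b j := (swap a b).injective.ne hij
  ext
  push_cast
  rw [val_transposition hab, val_transposition hij, val_transposition hij', mul_sub,
    sub_mul_gen, sub_mul_gen, neg_sub_neg, sub_mul, neg_sub]

lemma transposition_mul_transposition_mul_self {a b c d : α} (h : [a, b, c, d].Nodup) :
    transposition a b * transposition c d * (transposition a b * transposition c d) =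
      (-1 : (SpinAlgebra α)ˣ) := by
  have hab : a ≠ b := by simp_all
  have hcd : c ≠ d := by simp_all
  have hcomm : transposition a b * transposition c d =
      -(transposition c d * transposition a b) := by
    rw [transposition_mul hab hcd, swap_apply_of_ne_of_ne, swap_apply_of_ne_of_ne] <;>
      simp_all [eq_comm]
  nth_rw 1 [hcomm]
  rw [neg_mul, mul_assoc, ← mul_assoc (transposition a b), transposition_mul_self hab, neg_one_mul,
    mul_neg, neg_neg, transposition_mul_self hcd]

lemma isTranspositionSystem_mk_transposition :
    IsTranspositionSystem fun a b : α =>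
      QuotientGroup.mk' (negOnePowHom (SpinAlgebra α)ˣ).range (transposition a b) where
  refl a := by rw [transposition_self, map_one]
  mul_self a b := by
    rw [← map_mul, ← MonoidHom.mem_ker, QuotientGroup.ker_mk']
    rcases eq_or_ne a b with rfl | h
    · rw [transposition_self, mul_one]
      exact one_mem _
    · exact ⟨_, negOnePowHom_ofAdd_one.trans (transposition_mul_self h).symm⟩
  mul_eq a b i j := by
    rcases eq_or_ne a b with rfl | hab
    · simp [transposition_self]
    rcases eq_or_ne i j with rfl | hij
    · simp [transposition_self]
    have h : (-1 : (SpinAlgebra α)ˣ) ∈ (QuotientGroup.mk' (negOnePowHom _).range).ker := by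
      rw [QuotientGroup.ker_mk']
      exact ⟨_, negOnePowHom_ofAdd_one⟩
    rw [← map_mul, transposition_mul hab hij, ← neg_one_mul, map_mul, h, one_mul, map_mul]

end SpinAlgebra

open SpinAlgebra

/-- The class of the spin double cover of `Perm α`. -/
theorem exists_isTwoCocycle_liftSquare_eq_one (α : Type*) [Finite α] [DecidableEq α] :
    ∃ f : Perm α → Perm α → ZMod 2, IsTwoCocycle f ∧
      (∀ a b, a ≠ b → liftSquare (swap a b) f = 1) ∧
      ∀ a b c d, [a, b, c, d].Nodup → liftSquare (swap a b * swap c d) f = 1 := by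
  have := Fintype.ofFinite α
  let j := negOnePowHom (SpinAlgebra α)ˣ
  have hj : Function.Injective j :=
    negOnePowHom_injective fun h => neg_one_ne_one (congrArg Units.val h)
  have : j.range.Normal := normal_range_negOnePowHom _
  let π := QuotientGroup.mk' j.range
  obtain ⟨φ, hφ⟩ : ∃ φ : Perm α →* (SpinAlgebra α)ˣ ⧸ j.range,
      ∀ a b, φ (swap a b) = π (transposition a b) :=
    isTranspositionSystem_mk_transposition.exists_monoidHom
  let u (σ : Perm α) : (SpinAlgebra α)ˣ := (φ σ).out
  have hu (σ : Perm α) : π (u σ) = φ σ := QuotientGroup.out_eq' _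
  have exists_eq_mul {x y : (SpinAlgebra α)ˣ} (h : π x = π y) : ∃ z, x = j z * y := by
    obtain ⟨z, hz⟩ := QuotientGroup.eq.1 h.symm
    exact ⟨z, by rw [(negOnePowHom_commute z y).eq, hz, mul_inv_cancel_left]⟩
  obtain ⟨f, hf, huf⟩ := exists_isTwoCocycle_of_mul_eq hj negOnePowHom_commute fun σ τ =>
    exists_eq_mul (x := u σ * u τ) (y := u (σ * τ)) (by simp only [map_mul, hu])
  have liftSquare_eq_one {σ : Perm α} {t : (SpinAlgebra α)ˣ} (hσ : σ * σ = 1) (hσt : φ σ = π t)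
      (ht : t * t = -1) : liftSquare σ f = 1 := by
    obtain ⟨z, hz⟩ := exists_eq_mul ((hu σ).trans hσt)
    apply Multiplicative.ofAdd.injective (hj _)
    calc j (.ofAdd (f σ σ + f 1 1)) = u σ * u σ := (mul_self_eq_of_mul_eq huf hσ).symm
      _ = j (z * z) * (t * t) := by
        rw [hz, (negOnePowHom_commute z t).symm.mul_mul_mul_comm, map_mul]
      _ = j 1 * (t * t) := congrArg (j · * _) (CharTwo.add_self_eq_zero z.toAdd)
      _ = j (.ofAdd 1) := by rw [map_one, one_mul, ht, negOnePowHom_ofAdd_one]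
  exact ⟨f, hf,
    fun a b h => liftSquare_eq_one (swap_mul_self a b) (hφ a b) (transposition_mul_self h),
    fun a b c d h => liftSquare_eq_one (swap_mul_swap_mul_self h)
      (by rw [map_mul, map_mul, hφ, hφ]) (transposition_mul_transposition_mul_self h)⟩

/-- The cup square of the sign character. -/
theorem exists_isTwoCocycle_liftSquare_swap_mul_swap_eq_zero (α : Type*) [Finite α]
    [DecidableEq α] :
    ∃ f : Perm α → Perm α → ZMod 2, IsTwoCocycle f ∧
      (∀ a b, a ≠ b → liftSquare (swap a b) f = 1) ∧
      ∀ a b c d, [a, b, c, d].Nodup → liftSquare (swap a b * swap c d) f = 0 := by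
  have := Fintype.ofFinite α
  let signEquiv : Multiplicative (ZMod 2) ≃* ℤˣ := MulEquiv.ofBijective (negOnePowHom ℤˣ) <|
    (Fintype.bijective_iff_injective_and_card _).2 ⟨negOnePowHom_injective (by decide), rfl⟩
  let χ : Perm α →* Multiplicative (ZMod 2) := signEquiv.symm.toMonoidHom.comp Perm.sign
  have hχ {a b : α} (h : a ≠ b) : χ (swap a b) = .ofAdd 1 :=
    signEquiv.symm_apply_eq.2 ((Perm.sign_swap h).trans negOnePowHom_ofAdd_one.symm)
  refine ⟨_, isTwoCocycle_mul_hom χ, fun a b h => ?_, fun a b c d h => ?_⟩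
  · simp [liftSquare_apply, hχ h]
  · have hab : a ≠ b := by simp_all
    have hcd : c ≠ d := by simp_all
    simp [liftSquare_apply, hχ hab, hχ hcd, CharTwo.add_self_eq_zero]

end Spin

section SymmetricGroup

open Equiv

lemma exists_nodup_of_four_le_card {α : Type*} [Fintype α] (h : 4 ≤ Fintype.card α) :
    ∃ a b c d : α, [a, b, c, d].Nodup := by
  obtain ⟨e⟩ := Function.Embedding.nonempty_of_card_le (α := Fin 4) (β := α) (by simpa)
  exact ⟨_, _, _, _, List.Nodup.map e.injective (l := [0, 1, 2, 3]) (by decide)⟩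

theorem finrank_H2_perm {α : Type} [Fintype α] (hα : 4 ≤ Fintype.card α) :
    Module.finrank (ZMod 2) (groupCohomology (Rep.trivial (ZMod 2) (Perm α) (ZMod 2)) 2) = 2 := by
  classical
  obtain ⟨a, b, c, d, h⟩ := exists_nodup_of_four_le_card hα
  have hab : a ≠ b := by simp_all
  let Φ : (Perm α → Perm α → ZMod 2) →ₗ[ZMod 2] ZMod 2 × ZMod 2 :=
    (liftSquare (swap a b)).prod (liftSquare (swap a b * swap c d))
  obtain ⟨f, hf, hf_swap, hf_double⟩ := exists_isTwoCocycle_liftSquare_eq_one α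
  obtain ⟨g, hg, hg_swap, hg_double⟩ := exists_isTwoCocycle_liftSquare_swap_mul_swap_eq_zero α
  have hΦf : Φ f = (1, 1) := Prod.ext (hf_swap a b hab) (hf_double a b c d h)
  have hΦg : Φ g = (1, 0) := Prod.ext (hg_swap a b hab) (hg_double a b c d h)
  rw [finrank_H2_trivial_eq Φ, Module.finrank_prod, Module.finrank_self]
  · exact fun f hf => ⟨fun h' => Prod.ext (h'.liftSquare_eq_zero (swap_mul_self a b))
      (h'.liftSquare_eq_zero (swap_mul_swap_mul_self h)), fun h' =>
      hf.isTwoCoboundary_of_liftSquare_eq_zero h (congrArg Prod.fst h') (congrArg Prod.snd h')⟩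
  · rintro ⟨x, y⟩
    refine ⟨y • f + (x - y) • g, (hf.smul y).add (hg.smul (x - y)), ?_⟩
    rw [map_add, map_smul, map_smul, hΦf, hΦg]
    simp

end SymmetricGroup

section EvenExtension

open Equiv

variable {α : Type*} [DecidableEq α] {s : Finset α} {p q : α}

lemma ite_swap_apply_mem (hp : p ∈ s) (hq : q ∈ s) {r : α} (hr : r ∈ s) (P : Prop)
    [Decidable P] : (if P then 1 else swap p q) r ∈ s := by
  split_ifs
  · exact hr
  · rw [swap_apply_def]
    split_ifs
    exacts [hq, hp, hr]

variable [Fintype α]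

/-- The embedding of the symmetric group on the complement of `s` in the alternating group that
makes permutations even by multiplying the odd ones by `swap p q`, where `p, q ∈ s`. -/
def evenExtend (hpq : p ≠ q) (hp : p ∈ s) (hq : q ∈ s) :
    Perm {x // x ∉ s} →* alternatingGroup α where
  toFun σ := ⟨Perm.ofSubtype σ * if Perm.sign σ = 1 then 1 else swap p q, by
    rw [Perm.mem_alternatingGroup, map_mul, Perm.sign_ofSubtype]
    rcases Int.units_eq_one_or (Perm.sign σ) with h | h <;> simp [h, hpq]⟩
  map_one' := by simp
  map_mul' σ τ := by
    have hcomm : Commute (Perm.ofSubtype τ) (swap p q) := by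
      rw [Commute, SemiconjBy, mul_swap_eq_swap_mul,
        Perm.ofSubtype_apply_of_not_mem τ (not_not.2 hp),
        Perm.ofSubtype_apply_of_not_mem τ (not_not.2 hq)]
    ext1
    push_cast
    rcases Int.units_eq_one_or (Perm.sign σ) with hσ | hσ <;>
      rcases Int.units_eq_one_or (Perm.sign τ) with hτ | hτ <;>
      simp [hσ, hτ, mul_assoc, hcomm.eq]

variable (hpq : p ≠ q) (hp : p ∈ s) (hq : q ∈ s)

lemma evenExtend_swap {a b : {x // x ∉ s}} (h : a ≠ b) :
    (evenExtend hpq hp hq (swap a b) : Perm α) = swap (a : α) b * swap p q := by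
  simp [evenExtend, h, Perm.ofSubtype_swap_eq]

lemma evenExtend_swap_mul_swap {a b c d : {x // x ∉ s}} (hab : a ≠ b) (hcd : c ≠ d) :
    (evenExtend hpq hp hq (swap a b * swap c d) : Perm α) = swap (a : α) b * swap (c : α) d := by
  simp [evenExtend, hab, hcd, Perm.ofSubtype_swap_eq]

lemma evenExtend_apply_coe (σ : Perm {x // x ∉ s}) (x : {x // x ∉ s}) :
    evenExtend hpq hp hq σ • (x : α) = σ x := by
  have hx : (if Perm.sign σ = 1 then 1 else swap p q) (x : α) = x := by
    split_ifs
    · rfl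
    · exact swap_apply_of_ne_of_ne (ne_of_mem_of_not_mem hp x.2).symm
        (ne_of_mem_of_not_mem hq x.2).symm
  exact (congrArg _ hx).trans (Perm.ofSubtype_apply_coe σ x)

lemma evenExtend_apply_of_mem (σ : Perm {x // x ∉ s}) {r : α} (hr : r ∈ s) :
    evenExtend hpq hp hq σ • r = (if Perm.sign σ = 1 then 1 else swap p q) r :=
  Perm.ofSubtype_apply_of_not_mem σ (not_not.2 (ite_swap_apply_mem hp hq hr _))

lemma evenExtend_apply_of_ne (σ : Perm {x // x ∉ s}) {r : α} (hr : r ∈ s) (hrp : r ≠ p)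
    (hrq : r ≠ q) : evenExtend hpq hp hq σ • r = r := by
  rw [evenExtend_apply_of_mem hpq hp hq σ hr]
  split_ifs
  · rfl
  · exact swap_apply_of_ne_of_ne hrp hrq

lemma evenExtend_smul_eq (σ : Perm {x // x ∉ s}) : evenExtend hpq hp hq σ • s = s := by
  refine Finset.eq_of_subset_of_card_le (fun x hx => ?_) (Finset.card_smul_finset _ _).ge
  obtain ⟨r, hr, rfl⟩ := Finset.mem_smul_finset.1 hx
  exact evenExtend_apply_of_mem hpq hp hq σ hr ▸ ite_swap_apply_mem hp hq hr _

lemma evenExtend_injective : Function.Injective (evenExtend hpq hp hq) := fun σ τ h =>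
  Equiv.ext fun x => Subtype.ext <| by
    rw [← evenExtend_apply_coe hpq hp hq, h, evenExtend_apply_coe]

lemma two_mul_card_mul_index_range_mul_factorial {X : Type*} [MulAction (alternatingGroup α) X]
    [MulAction.IsPretransitive (alternatingGroup α) X] [Nontrivial α] {β : Type*} [Finite β]
    {x : X} {J : Perm β →* MulAction.stabilizer (alternatingGroup α) x}
    (hJ : Function.Injective J) :
    2 * (Nat.card X * (J.range.index * (Nat.card β).factorial)) = (Nat.card α).factorial := by
  rw [← Nat.card_perm, Nat.card_congr (MonoidHom.ofInjective hJ).toEquiv, Subgroup.index_mul_card,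
    ← MulAction.index_stabilizer_of_transitive (alternatingGroup α) x, Subgroup.index_mul_card,
    two_mul_nat_card_alternatingGroup, Nat.card_perm]

end EvenExtension

section PointStabilizer

open Equiv MulAction

variable {α : Type*} [DecidableEq α]

lemma nodup_of_notMem {r p q : α} {a b c d : {x // x ∉ ({r, p, q} : Finset α)}}
    (h : [a, b, c, d].Nodup) (h' : [p, q, r].Nodup) :
    [(a : α), b, c, d, p, q, r].Nodup := by
  have := a.2
  have := b.2
  have := c.2
  have := d.2
  simp_all [Subtype.ext_iff, eq_comm]

variable [Fintype α]

lemma exists_mem_alternatingGroup_conj_eq {a b c d p q r : α} (h : [a, b, c, d, p, q, r].Nodup) :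
    ∃ u ∈ alternatingGroup α, u r = r ∧
      u * (swap a b * swap c d) * u⁻¹ = swap a b * swap p q := by
  refine ⟨swap c p * swap d q, ?_, ?_, ?_⟩
  · have hcp : c ≠ p := by simp_all
    have hdq : d ≠ q := by simp_all
    simp [Perm.mem_alternatingGroup, hcp, hdq]
  · simp_all [swap_apply_def, eq_comm]
  · rw [← conj_mul, ← swap_apply_apply, ← swap_apply_apply]
    congr 2 <;> simp_all [swap_apply_def, eq_comm]

lemma card_notMem (s : Finset α) : Fintype.card {x // x ∉ s} = Fintype.card α - s.card := by
  rw [Fintype.card_subtype_compl, Fintype.card_coe]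

section EvenExtendStabilizer

variable {r p q : α} (hrp : r ≠ p) (hrq : r ≠ q) (hpq : p ≠ q)

/-- The embedding `evenExtend` for `s = {r, p, q}`, viewed as a map to the stabilizer of `r`, which
its values fix. -/
def evenExtendStabilizer :
    Perm {x // x ∉ ({r, p, q} : Finset α)} →* stabilizer (alternatingGroup α) r :=
  (evenExtend hpq (by simp) (by simp)).codRestrict _ fun σ =>
    evenExtend_apply_of_ne hpq _ _ σ (by simp) hrp hrq

lemma evenExtendStabilizer_injective : Function.Injective (evenExtendStabilizer hrp hrq hpq) :=
  fun _ _ h => evenExtend_injective hpq _ _ (congrArg Subtype.val h)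

lemma evenExtendStabilizer_swap {a b : {x // x ∉ ({r, p, q} : Finset α)}} (h : a ≠ b) :
    (evenExtendStabilizer hrp hrq hpq (swap a b) : Perm α) = swap (a : α) b * swap p q :=
  evenExtend_swap hpq _ _ h

lemma isConj_evenExtendStabilizer {a b c d : {x // x ∉ ({r, p, q} : Finset α)}}
    (h : [a, b, c, d].Nodup) :
    IsConj (evenExtendStabilizer hrp hrq hpq (swap a b * swap c d))
      (evenExtendStabilizer hrp hrq hpq (swap a b)) := by
  have hab : a ≠ b := by simp_all
  have hcd : c ≠ d := by simp_all
  obtain ⟨u, hu_even, hur, hu⟩ :=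
    exists_mem_alternatingGroup_conj_eq (nodup_of_notMem h (by simp [hpq, hrp.symm, hrq.symm]))
  refine isConj_iff.2 ⟨⟨⟨u, hu_even⟩, hur⟩, Subtype.ext (Subtype.ext ?_)⟩
  rw [evenExtendStabilizer_swap hrp hrq hpq hab, ← hu]
  exact congrArg (u * · * u⁻¹) (evenExtend_swap_mul_swap hpq _ _ hab hcd)

lemma index_range_evenExtendStabilizer :
    (evenExtendStabilizer hrp hrq hpq).range.index = (Fintype.card α - 1).choose 2 := by
  have hs : ({r, p, q} : Finset α).card = 3 := Finset.card_eq_three.2 ⟨r, p, q, hrp, hrq, hpq, rfl⟩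
  have h3 : 3 ≤ Fintype.card α := hs ▸ Finset.card_le_univ _
  have := alternatingGroup.isPretransitive_of_three_le_card α (by simpa using h3)
  have : Nontrivial α := ⟨p, q, hpq⟩
  have hcard := two_mul_card_mul_index_range_mul_factorial
    (evenExtendStabilizer_injective hrp hrq hpq)
  obtain ⟨m, hm⟩ : ∃ m, Fintype.card α = m + 3 := Nat.exists_eq_add_of_le' h3
  have hchoose := Nat.choose_mul_factorial_mul_factorial (show 2 ≤ m + 2 by omega)
  simp only [Nat.card_eq_fintype_card, card_notMem, hs, hm, Nat.add_sub_cancel,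
    Nat.factorial_succ (m + 2), ← hchoose] at hcard
  have hpos : 0 < 2 * (m + 3) * m.factorial := by positivity
  refine Nat.eq_of_mul_eq_mul_left hpos ?_
  rw [hm, show m + 3 - 1 = m + 2 from rfl]
  simp only [Nat.factorial_two] at hcard
  linear_combination hcard

end EvenExtendStabilizer

theorem finrank_H2_stabilizer {α : Type} [Fintype α] [DecidableEq α] (hα : 7 ≤ Fintype.card α)
    (hodd : Odd ((Fintype.card α - 1).choose 2)) (r : α) :
    Module.finrank (ZMod 2) (groupCohomology
      (Rep.trivial (ZMod 2) (stabilizer (alternatingGroup α) r) (ZMod 2)) 2) = 1 := by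
  obtain ⟨p, hp, q, hq, hpq⟩ : ∃ p ∈ ({r}ᶜ : Finset α), ∃ q ∈ ({r}ᶜ : Finset α), p ≠ q :=
    Finset.one_lt_card.1 (by rw [Finset.card_compl, Finset.card_singleton]; omega)
  have hrp : r ≠ p := by simpa [eq_comm] using hp
  have hrq : r ≠ q := by simpa [eq_comm] using hq
  obtain ⟨a, b, c, d, h⟩ :=
    exists_nodup_of_four_le_card (α := {x // x ∉ ({r, p, q} : Finset α)}) <| by
      rw [card_notMem, Finset.card_eq_three.2 ⟨r, p, q, hrp, hrq, hpq, rfl⟩]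
      omega
  let J := evenExtendStabilizer hrp hrq hpq
  have hab : a ≠ b := by simp_all
  have hswap : J (swap a b) * J (swap a b) = 1 := by rw [← map_mul, swap_mul_self, map_one]
  have hdouble : J (swap a b * swap c d) * J (swap a b * swap c d) = 1 := by
    rw [← map_mul, swap_mul_swap_mul_self h, map_one]
  rw [finrank_H2_trivial_eq (liftSquare (J (swap a b))), Module.finrank_self]
  · refine fun f hf => ⟨fun hf' => hf'.liftSquare_eq_zero hswap, fun hf' => ?_⟩
    refine hf.isTwoCoboundary_of_odd_index_range (evenExtendStabilizer_injective hrp hrq hpq)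
      (index_range_evenExtendStabilizer hrp hrq hpq ▸ hodd)
      ((hf.comp J).isTwoCoboundary_of_liftSquare_eq_zero h ?_ ?_)
    · simpa [liftSquare_apply] using hf'
    · simpa [liftSquare_apply] using (hf.liftSquare_eq_of_isConj
        (isConj_evenExtendStabilizer hrp hrq hpq h) hdouble).trans hf'
  · obtain ⟨f, hf, -, hf_double⟩ := exists_isTwoCocycle_liftSquare_eq_one α
    let ι := (alternatingGroup α).subtype.comp (stabilizer (alternatingGroup α) r).subtype
    have hval : [(a : α), b, p, q].Nodup := by
      have := nodup_of_notMem h (by simp [hpq, hrp.symm, hrq.symm])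
      simp_all
    have hJ : ι (J (swap a b)) = swap (a : α) b * swap p q :=
      evenExtendStabilizer_swap hrp hrq hpq hab
    refine fun v => ⟨_, (hf.comp ι).smul v, ?_⟩
    rw [map_smul, liftSquare_apply, hJ, map_one, ← liftSquare_apply, hf_double _ _ _ _ hval,
      smul_eq_mul, mul_one]

end PointStabilizer

section PairStabilizer

open Equiv MulAction

lemma isPretransitive_Xk {k : ℕ} (hk : 4 ≤ k) :
    IsPretransitive (alternatingGroup (Fin k)) (Xk k) := by
  have := alternatingGroup.isMultiplyPretransitive (Fin k)
  have : IsMultiplyPretransitive (alternatingGroup (Fin k)) (Fin k) 2 :=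
    isMultiplyPretransitive_of_le (n := Nat.card (Fin k) - 2) (by rw [Nat.card_fin]; omega)
      (Nat.sub_le _ _)
  refine ⟨fun s t => ?_⟩
  obtain ⟨a, b, hab, hs⟩ := Finset.card_eq_two.1 s.2
  obtain ⟨c, d, hcd, ht⟩ := Finset.card_eq_two.1 t.2
  obtain ⟨g, hac, hbd⟩ := is_two_pretransitive_iff.1 this hab hcd
  refine ⟨g, Subtype.ext ?_⟩
  change g • s.1 = t.1
  rw [hs, ht, Finset.smul_finset_insert, Finset.smul_finset_singleton, hac, hbd]

lemma card_Xk (k : ℕ) : Nat.card (Xk k) = k.choose 2 := by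
  rw [Nat.card_eq_fintype_card]
  exact (Fintype.card_finset_len 2).trans (by rw [Fintype.card_fin])

theorem nonempty_perm_mulEquiv_stabilizer {k : ℕ} (hk : 4 ≤ k) (x : Xk k) :
    Nonempty (Perm {i // i ∉ x.1} ≃* stabilizer (alternatingGroup (Fin k)) x) := by
  obtain ⟨p, q, hpq, hx⟩ := Finset.card_eq_two.1 x.2
  let J : Perm {i // i ∉ x.1} →* stabilizer (alternatingGroup (Fin k)) x :=
    (evenExtend hpq (by simp [hx]) (by simp [hx])).codRestrict _ fun σ =>
      Subtype.ext (evenExtend_smul_eq hpq _ _ σ)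
  have hJ : Function.Injective J := fun _ _ h =>
    evenExtend_injective hpq _ _ (congrArg Subtype.val h)
  have := isPretransitive_Xk hk
  have : Nontrivial (Fin k) := ⟨p, q, hpq⟩
  have hcard := two_mul_card_mul_index_range_mul_factorial hJ
  rw [card_Xk, Nat.card_eq_fintype_card (α := {i // _}), card_notMem, x.2, Nat.card_fin,
    Fintype.card_fin, ← Nat.choose_mul_factorial_mul_factorial (show 2 ≤ k by omega)] at hcard
  have hpos : 0 < 2 * k.choose 2 * (k - 2).factorial := by
    have := Nat.choose_pos (show 2 ≤ k by omega)
    positivity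
  have hindex : J.range.index = 1 := by
    refine Nat.eq_of_mul_eq_mul_left hpos ?_
    rw [Nat.factorial_two] at hcard
    linear_combination hcard
  exact ⟨.ofBijective J ⟨hJ, MonoidHom.range_eq_top.1 (Subgroup.index_eq_one.1 hindex)⟩⟩

theorem finrank_H2_stabilizer_Xk {k : ℕ} (hk : 6 ≤ k) (x : Xk k) :
    Module.finrank (ZMod 2) (groupCohomology
      (Rep.trivial (ZMod 2) (stabilizer (alternatingGroup (Fin k)) x) (ZMod 2)) 2) = 2 := by
  obtain ⟨e⟩ := nonempty_perm_mulEquiv_stabilizer (by omega) x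
  have hcard : 4 ≤ Fintype.card {i // i ∉ x.1} := by
    rw [card_notMem, x.2, Fintype.card_fin]
    omega
  have i := groupCohomology.mapIso (A := Rep.trivial (ZMod 2) _ (ZMod 2))
    (B := Rep.trivial (ZMod 2) _ (ZMod 2)) e (LinearEquiv.refl _ _) (fun _ => rfl) 2
  exact i.toLinearEquiv.finrank_eq.symm.trans (finrank_H2_perm hcard)

end PairStabilizer

section Cohomology

open CategoryTheory MulAction

universe u

theorem finrank_groupCohomology_add_of_splitting {K G : Type u} [Field K] [Group G]
    {S : ShortComplex (Rep.{u} K G)} (s : S.Splitting) (n : ℕ)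
    [Module.Finite K (groupCohomology S.X₂ n)] :
    Module.finrank K (groupCohomology S.X₁ n) + Module.finrank K (groupCohomology S.X₃ n) =
      Module.finrank K (groupCohomology S.X₂ n) := by
  let T := groupCohomology.cochainsFunctor K G ⋙ HomologicalComplex.homologyFunctor _ _ n
  let e : groupCohomology S.X₂ n ≃ₗ[K] groupCohomology S.X₁ n × groupCohomology S.X₃ n :=
    ((s.map T).isoBinaryBiproduct ≪≫ ModuleCat.biprodIsoProd _ _).toLinearEquiv
  have := Module.Finite.equiv e
  have : Module.Finite K (groupCohomology S.X₁ n) :=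
    .of_surjective (LinearMap.fst K _ (groupCohomology S.X₃ n)) LinearMap.fst_surjective
  have : Module.Finite K (groupCohomology S.X₃ n) :=
    .of_surjective (LinearMap.snd K (groupCohomology S.X₁ n) _) LinearMap.snd_surjective
  rw [e.finrank_eq, Module.finrank_prod]

theorem finrank_groupCohomology_subRep_add {K G V W : Type u} [Field K] [Group G]
    [AddCommGroup V] [Module K V] [AddCommGroup W] [Module K W] {ρ : Representation K G V}
    {τ : Representation K G W} (π : ρ.IntertwiningMap τ) (σ : τ.IntertwiningMap ρ)
    (hσ : ∀ w, π (σ w) = w) {U : Submodule K V} (hU : InvSub ρ U)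
    (hker : LinearMap.ker π.toLinearMap = U) (n : ℕ)
    [Module.Finite K (groupCohomology (Rep.of ρ) n)] :
    Module.finrank K (groupCohomology (Rep.of (subRep ρ U hU)) n) +
      Module.finrank K (groupCohomology (Rep.of τ) n) =
      Module.finrank K (groupCohomology (Rep.of ρ) n) := by
  let ι : (subRep ρ U hU).IntertwiningMap ρ := ⟨U.subtype, fun _ => rfl⟩
  let S : ShortComplex (Rep.{u} K G) := .mk (Rep.ofHom ι) (Rep.ofHom π) <| by
    ext u
    exact LinearMap.mem_ker.1 (hker ▸ u.2)
  have hexact : S.Exact := by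
    rw [← S.exact_map_iff_of_faithful (forget₂ (Rep K G) (ModuleCat K)),
      ShortComplex.moduleCat_exact_iff]
    intro v hv
    exact ⟨⟨v, hker ▸ LinearMap.mem_ker.2 hv⟩, rfl⟩
  have hmono : Mono S.f := (Rep.mono_iff_injective S.f).2 U.injective_subtype
  have s : S.Splitting := .ofExactOfSection S hexact (Rep.ofHom σ) (by ext w; exact hσ w) hmono
  exact finrank_groupCohomology_add_of_splitting s n

lemma nonempty_permRep_equiv_coind (R : Type*) [CommRing R] {G X : Type*} [Group G]
    [MulAction G X] [IsPretransitive G X] (x₀ : X) :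
    Nonempty ((permRep R G X).Equiv (Representation.coind (stabilizer G x₀).subtype
      (Representation.trivial R (stabilizer G x₀) R))) := by
  choose t ht using fun x : X => exists_smul_eq G x x₀
  let e : (X → R) ≃ₗ[R] Representation.coindV (stabilizer G x₀).subtype
      (Representation.trivial R (stabilizer G x₀) R) :=
    { toFun v := ⟨fun g => v (g⁻¹ • x₀), fun h g => congrArg v <| by
        rw [mul_inv_rev, mul_smul, Subgroup.subtype_apply, inv_smul_eq_iff.2 h.2.symm]⟩
      map_add' _ _ := rfl
      map_smul' _ _ := rfl
      invFun f x := f.1 (t x)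
      left_inv v := funext fun x => congrArg v (inv_smul_eq_iff.2 (ht x).symm)
      right_inv f := Subtype.ext <| funext fun g => by
        have hmem : t (g⁻¹ • x₀) * g⁻¹ ∈ stabilizer G x₀ := by
          rw [mem_stabilizer_iff, mul_smul, ht]
        simpa using f.2 ⟨_, hmem⟩ g }
  exact ⟨.mk e fun g => LinearMap.ext fun v => Subtype.ext <| funext fun h => congrArg v <|
    show g⁻¹ • h⁻¹ • x₀ = (h * g)⁻¹ • x₀ by rw [mul_inv_rev, mul_smul]⟩

theorem finrank_groupCohomology_permRep {R G X : Type u} [CommRing R] [Group G] [MulAction G X]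
    [IsPretransitive G X] (x₀ : X) (n : ℕ) :
    Module.finrank R (groupCohomology (Rep.of (permRep R G X)) n) =
      Module.finrank R (groupCohomology (Rep.trivial R (stabilizer G x₀) R) n) := by
  obtain ⟨e⟩ := nonempty_permRep_equiv_coind (G := G) R x₀
  exact ((groupCohomology.functor R G n).mapIso (Rep.mkIso e) ≪≫
    groupCohomology.coindIso (Rep.trivial R (stabilizer G x₀) R) n).toLinearEquiv.finrank_eq

end Cohomology

section PermutationModules

theorem finrank_H2_permRep {α : Type} [Fintype α] [DecidableEq α] (hα : 7 ≤ Fintype.card α)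
    (hodd : Odd ((Fintype.card α - 1).choose 2)) :
    Module.finrank (ZMod 2)
      (groupCohomology (Rep.of (permRep (ZMod 2) (alternatingGroup α) α)) 2) = 1 := by
  have := alternatingGroup.isPretransitive_of_three_le_card α
    (by rw [Nat.card_eq_fintype_card]; omega)
  obtain ⟨r⟩ : Nonempty α := Fintype.card_pos_iff.1 (by omega)
  rw [finrank_groupCohomology_permRep r, finrank_H2_stabilizer hα hodd]

theorem finrank_H2_permRep_Xk {k : ℕ} (hk : 6 ≤ k) :
    Module.finrank (ZMod 2)
      (groupCohomology (Rep.of (permRep (ZMod 2) (alternatingGroup (Fin k)) (Xk k))) 2) = 2 := by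
  have := isPretransitive_Xk (k := k) (by omega)
  obtain ⟨x⟩ : Nonempty (Xk k) :=
    (Nat.card_pos_iff.1 (card_Xk k ▸ Nat.choose_pos (by omega))).1
  rw [finrank_groupCohomology_permRep x, finrank_H2_stabilizer_Xk hk]

end PermutationModules

section OrthonormalColumns

open Matrix

universe u

variable {R G X Y : Type*} [CommRing R] [Group G] [Fintype X]

/-- Multiplication by an equivariant matrix, as a map of permutation modules. -/
def mulVecIntertwining [MulAction G X] [MulAction G Y] (M : Matrix Y X R)
    (hM : ∀ (g : G) y x, M (g • y) (g • x) = M y x) :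
    (permRep R G X).IntertwiningMap (permRep R G Y) where
  toLinearMap := M.mulVecLin
  isIntertwining' g := LinearMap.ext fun v => funext fun y =>
    Fintype.sum_equiv (MulAction.toPerm g⁻¹) _ _ fun x =>
      congrArg (· * v (g⁻¹ • x)) (hM g⁻¹ y x).symm

lemma mem_perpSub_iff [DecidableEq X] {U : Submodule R (X → R)} {v : X → R} :
    v ∈ perpSub R U ↔ ∀ w ∈ U, w ⬝ᵥ v = 0 := by
  simp [perpSub, formMap, dotProduct]

lemma perpSub_span_range_col [DecidableEq X] (M : Matrix X Y R) :
    perpSub R (Submodule.span R (Set.range M.col)) = LinearMap.ker Mᵀ.mulVecLin := by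
  ext v
  rw [mem_perpSub_iff, LinearMap.mem_ker, mulVecLin_apply]
  refine ⟨fun h => funext fun y => h _ (Submodule.subset_span ⟨y, rfl⟩), fun h w hw => ?_⟩
  induction hw using Submodule.span_induction with
  | mem w hw =>
    obtain ⟨y, rfl⟩ := hw
    exact congrFun h y
  | zero => exact zero_dotProduct v
  | add w w' _ _ hw hw' => rw [add_dotProduct, hw, hw', add_zero]
  | smul c w _ hw => rw [smul_dotProduct, hw, smul_zero]

theorem finrank_groupCohomology_perpSub_add {K G X Y : Type u} [Field K] [Group G] [Fintype X]
    [DecidableEq X] [Finite Y] [DecidableEq Y] [MulAction G X] [MulAction G Y]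
    {M : Matrix X Y K} (hM : ∀ (g : G) x y, M (g • x) (g • y) = M x y) (horth : Mᵀ * M = 1)
    {U : Submodule K (X → K)} (hU : InvSub (permRep K G X) U)
    (hspan : U = Submodule.span K (Set.range M.col)) (n : ℕ)
    [Module.Finite K (groupCohomology (Rep.of (permRep K G X)) n)] :
    Module.finrank K
        (groupCohomology (Rep.of (subRep _ _ (perpSub_inv K G U hU))) n) +
      Module.finrank K (groupCohomology (Rep.of (permRep K G Y)) n) =
      Module.finrank K (groupCohomology (Rep.of (permRep K G X)) n) :=
  have := Fintype.ofFinite Y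
  finrank_groupCohomology_subRep_add (mulVecIntertwining Mᵀ fun g y x => hM g x y)
    (mulVecIntertwining M hM)
    (fun w => (mulVec_mulVec w Mᵀ M).trans (by rw [horth, one_mulVec])) _
    (hspan ▸ (perpSub_span_range_col M).symm) n

end OrthonormalColumns

section PairModule

open Matrix

/-- The matrix of non-incidence of pairs and points, whose columns span `P₁ + P₂` for odd `k`. -/
def avoidMatrix (k : ℕ) : Matrix (Xk k) (Fin k) (ZMod 2) := fun s i => if i ∈ s.1 then 0 else 1

lemma avoidMatrix_smul_smul {k : ℕ} (g : alternatingGroup (Fin k)) (s : Xk k) (i : Fin k) :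
    avoidMatrix k (g • s) (g • i) = avoidMatrix k s i :=
  if_congr (Finset.smul_mem_smul_finset_iff (g : Equiv.Perm (Fin k))) rfl rfl

lemma card_Xk_disjoint {k : ℕ} (t : Finset (Fin k)) :
    (Finset.univ.filter fun s : Xk k => Disjoint s.1 t).card = (k - t.card).choose 2 := by
  have hcard : (Finset.powersetCard 2 tᶜ).card = (k - t.card).choose 2 := by
    rw [Finset.card_powersetCard, Finset.card_compl, Fintype.card_fin]
  rw [← hcard]
  refine Finset.card_bij (fun s _ => s.1) (fun s hs => ?_) (fun _ _ _ _ => Subtype.ext) ?_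
  · rw [Finset.mem_filter_univ] at hs
    exact Finset.mem_powersetCard.2 ⟨Finset.subset_compl_iff_disjoint_right.2 hs, s.2⟩
  · intro s hs
    rw [Finset.mem_powersetCard, Finset.subset_compl_iff_disjoint_right] at hs
    exact ⟨⟨s, hs.2⟩, (Finset.mem_filter_univ _).2 hs.1, rfl⟩

lemma avoidMatrix_transpose_mul_apply {k : ℕ} (i j : Fin k) :
    ((avoidMatrix k)ᵀ * avoidMatrix k) i j = (k - ({i, j} : Finset (Fin k)).card).choose 2 := by
  rw [← card_Xk_disjoint, Finset.card_filter, Nat.cast_sum, Matrix.mul_apply]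
  refine Finset.sum_congr rfl fun s _ => ?_
  by_cases hi : i ∈ s.1 <;> by_cases hj : j ∈ s.1 <;>
    simp [avoidMatrix, transpose_apply, hi, hj]

lemma odd_choose_two {m : ℕ} (hm : m % 4 = 2) : Odd (m.choose 2) := by
  obtain ⟨t, rfl⟩ : ∃ t, m = 4 * t + 2 := ⟨m / 4, by omega⟩
  have : (4 * t + 2).choose 2 = (2 * t + 1) * (2 * (2 * t) + 1) := by
    rw [Nat.choose_two_right]
    exact Nat.div_eq_of_eq_mul_left two_pos (by rw [Nat.add_sub_assoc one_le_two]; ring)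
  exact this ▸ (odd_two_mul_add_one t).mul (odd_two_mul_add_one (2 * t))

lemma even_choose_two {m : ℕ} (hm : m % 4 = 1) : Even (m.choose 2) := by
  obtain ⟨t, rfl⟩ : ∃ t, m = 4 * t + 1 := ⟨m / 4, by omega⟩
  have : (4 * t + 1).choose 2 = (4 * t + 1) * (2 * t) := by
    rw [Nat.choose_two_right]
    exact Nat.div_eq_of_eq_mul_left two_pos (by rw [Nat.add_sub_cancel]; ring)
  exact this ▸ (even_two_mul t).mul_left _

theorem avoidMatrix_transpose_mul {k : ℕ} (hk : k % 4 = 3) :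
    (avoidMatrix k)ᵀ * avoidMatrix k = 1 := by
  ext i j
  rw [avoidMatrix_transpose_mul_apply]
  obtain rfl | hij := eq_or_ne i j
  · rw [Finset.pair_eq_singleton, Finset.card_singleton, one_apply_eq]
    exact ZMod.natCast_eq_one_iff_odd.2 (odd_choose_two (by omega))
  · rw [Finset.card_pair hij, one_apply_ne hij]
    exact ZMod.natCast_eq_zero_iff_even.2 (even_choose_two (by omega))

lemma col_avoidMatrix {k : ℕ} (i : Fin k) : (avoidMatrix k).col i = allOnes k + xVec k i := by
  ext s
  by_cases hi : i ∈ s.1 <;> simp [avoidMatrix, allOnes, xVec, hi, CharTwo.add_self_eq_zero]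

lemma sum_col_avoidMatrix {k : ℕ} (hk : Odd k) : ∑ i, (avoidMatrix k).col i = allOnes k := by
  ext s
  have hcard : (Finset.univ.filter fun i => i ∉ s.1).card = k - 2 := by
    rw [← Finset.compl_filter, Finset.filter_univ_mem, Finset.card_compl, Fintype.card_fin, s.2]
  have hpair : 2 ≤ k := s.2 ▸ card_finset_fin_le s.1
  simp only [Finset.sum_apply, Matrix.col_apply, avoidMatrix, allOnes, ← ite_not (_ ∈ s.1),
    Finset.sum_boole, hcard]
  exact ZMod.natCast_eq_one_iff_odd.2 (Nat.Odd.sub_even hpair hk even_two)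

theorem P1_sup_P2_eq_span_col {k : ℕ} (hk : Odd k) :
    P1 k ⊔ P2 k = Submodule.span (ZMod 2) (Set.range (avoidMatrix k).col) := by
  have hones : allOnes k ∈ Submodule.span (ZMod 2) (Set.range (avoidMatrix k).col) :=
    sum_col_avoidMatrix hk ▸ sum_mem fun i _ => Submodule.subset_span ⟨i, rfl⟩
  refine le_antisymm (sup_le ?_ ?_) (Submodule.span_le.2 ?_)
  · rwa [P1, Submodule.span_singleton_le_iff_mem]
  · refine Submodule.span_le.2 ?_
    rintro _ ⟨i, rfl⟩
    rw [SetLike.mem_coe, ← Submodule.add_mem_iff_right _ hones, ← col_avoidMatrix]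
    exact Submodule.subset_span ⟨i, rfl⟩
  · rintro _ ⟨i, rfl⟩
    rw [col_avoidMatrix]
    exact add_mem (Submodule.mem_sup_left (Submodule.mem_span_singleton_self _))
      (Submodule.mem_sup_right (Submodule.subset_span ⟨i, rfl⟩))

end PairModule

/-- **(Guralnick–Liebeck, Section 4.)** Let `k ≡ 3 (mod 4)`, `k ≥ 7`, and let
`P₃ ≅ S^(k-2,2) (mod 2)` be the irreducible summand `(P₁ + P₂)^⊥` of the `𝔽₂ A_k`
permutation module on 2-subsets. Then `dim H²(A_k, P₃) = 1` over `𝔽₂`. -/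
theorem dim_H2_P3_eq_one (k : ℕ) (hk : 7 ≤ k) (hmod : k % 4 = 3) :
    Module.finrank (ZMod 2) (groupCohomology (Rep.of (P3Rep k)) 2) = 1 := by
  have hpoints : Module.finrank (ZMod 2)
      (groupCohomology (Rep.of (permRep (ZMod 2) (alternatingGroup (Fin k)) (Fin k))) 2) = 1 :=
    finrank_H2_permRep (by rwa [Fintype.card_fin])
      (by rw [Fintype.card_fin]; exact odd_choose_two (by omega))
  have hpairs : Module.finrank (ZMod 2)
      (groupCohomology (Rep.of (permRep (ZMod 2) (alternatingGroup (Fin k)) (Xk k))) 2) = 2 :=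
    finrank_H2_permRep_Xk (by omega)
  have := Module.finite_of_finrank_pos (hpairs ▸ two_pos)
  have hsplit := finrank_groupCohomology_perpSub_add (n := 2) avoidMatrix_smul_smul
    (avoidMatrix_transpose_mul hmod) (P1_sup_P2_inv k)
    (P1_sup_P2_eq_span_col (Nat.odd_iff.2 (by omega)))
  rw [hpoints, hpairs] at hsplit
  exact Nat.add_right_cancel hsplit
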